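/- Let m, c ∈ ℝ with c < m, let v > 0, and let g : [0,∞) → (0,∞) be strictly increasing. Define the weight w(ω) := g(|ω − c|) and assume ∫ w(ω)·φ(ω; m, v) dω < ∞ and ∫ |ω|·w(ω)·φ(ω; m, v) dω < ∞. Then the reweighted mean strictly exceeds m: (∫ ω·w(ω)·φ(ω; m, v) dω) / (∫ w(ω)·φ(ω; m, v) dω) > m. Symmetrically, if c > m, the reweighted mean is strictly less than m. -/

import Mathlib

open MeasureTheory Real Filter

/-- The Gaussian density with mean `m` and variance `v`. -/
noncomputable def gauss (x m v : ℝ) : ℝ :=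
  (Real.sqrt (2 * Real.pi * v))⁻¹ * Real.exp (-(x - m) ^ 2 / (2 * v))

theorem refl_integral_pos (F : ℝ → ℝ) (m : ℝ) (hF : Integrable F)
    (h : ∀ x, x ≠ m → 0 < F x + F (2 * m - x)) : 0 < ∫ x, F x := by
  have hF2 : Integrable fun x => F (2 * m - x) := hF.comp_sub_left (2 * m)
  have e : ∫ x, F (2 * m - x) = ∫ x, F x := integral_sub_left_eq_self F volume (2 * m)
  have hae : ∀ᵐ x : ℝ, x ≠ m := by
    simp [ae_iff]
  have hp : 0 < ∫ x, (F x + F (2 * m - x)) := by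
    refine (integral_pos_iff_support_of_nonneg_ae ?_ (hF.add hF2)).2 ?_
    · filter_upwards [hae] with x hx using (h x hx).le
    · have hsub : Set.Ioi m ⊆ Function.support (fun x => F x + F (2 * m - x)) := by
        intro x hx
        exact (h x (ne_of_gt hx)).ne'
      refine lt_of_lt_of_le ?_ (measure_mono hsub)
      simp
  rw [integral_add hF hF2, e] at hp
  linarith

theorem gauss_refl (x m v : ℝ) : gauss (2 * m - x) m v = gauss x m v := by
  unfold gauss
  have : 2 * m - x - m = -(x - m) := by ring
  rw [this, neg_sq]

theorem gauss_pos' (x m v : ℝ) (hv : 0 < v) : 0 < gauss x m v := by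
  unfold gauss
  have := Real.pi_pos
  positivity

/-- Reweighting a Gaussian density by a weight that strictly increases in the distance to a
point `c` moves the mean away from `c`: if `c < m` the reweighted mean strictly exceeds `m`,
and symmetrically if `c > m` it is strictly less than `m`. -/
theorem stmt_15 (m c v : ℝ) (hv : 0 < v) (g : ℝ → ℝ)
    (hg_pos : ∀ x : ℝ, 0 ≤ x → 0 < g x)
    (hg_mono : StrictMonoOn g (Set.Ici (0 : ℝ)))
    (hInt : Integrable fun ω : ℝ => g |ω - c| * gauss ω m v)
    (hIntAbs : Integrable fun ω : ℝ => |ω| * (g |ω - c| * gauss ω m v)) :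
    (c < m →
      m < (∫ ω : ℝ, ω * (g |ω - c| * gauss ω m v)) /
            (∫ ω : ℝ, g |ω - c| * gauss ω m v)) ∧
    (m < c →
      (∫ ω : ℝ, ω * (g |ω - c| * gauss ω m v)) /
          (∫ ω : ℝ, g |ω - c| * gauss ω m v) < m) := by
  have hI1 : Integrable fun ω : ℝ => ω * (g |ω - c| * gauss ω m v) := by
    refine hIntAbs.mono (measurable_id.aestronglyMeasurable.mul hInt.aestronglyMeasurable) ?_
    filter_upwards with x
    simp
  have hF : Integrable fun ω : ℝ => (ω - m) * (g |ω - c| * gauss ω m v) := by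
    have := hI1.sub (hInt.const_mul m)
    refine this.congr ?_
    filter_upwards with x
    simp only [Pi.sub_apply]
    ring
  have hFe : ∫ ω : ℝ, (ω - m) * (g |ω - c| * gauss ω m v) =
      (∫ ω : ℝ, ω * (g |ω - c| * gauss ω m v)) - m * ∫ ω : ℝ, g |ω - c| * gauss ω m v := by
    rw [← integral_const_mul, ← integral_sub hI1 (hInt.const_mul m)]
    congr 1
    ext x
    ring
  have hwpos : ∀ x, 0 < g |x - c| * gauss x m v := fun x =>
    mul_pos (hg_pos _ (abs_nonneg _)) (gauss_pos' x m v hv)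
  have hD : 0 < ∫ ω : ℝ, g |ω - c| * gauss ω m v :=
    refl_integral_pos _ m hInt fun x _ => add_pos (hwpos _) (hwpos _)
  have hg : ∀ a b : ℝ, a ^ 2 < b ^ 2 → g |a| < g |b| := fun a b hab =>
    hg_mono (abs_nonneg a) (abs_nonneg b) (sq_lt_sq.mp hab)
  have key : ∀ x, (x - m) * (g |x - c| * gauss x m v)
      + (2 * m - x - m) * (g |2 * m - x - c| * gauss (2 * m - x) m v)
      = ((x - m) * (g |x - c| - g |2 * m - x - c|)) * gauss x m v := by
    intro x
    rw [gauss_refl]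
    ring
  constructor
  · intro hc
    rw [lt_div_iff₀ hD]
    have := refl_integral_pos _ m hF (fun x hx => by
      rw [key]
      refine mul_pos ?_ (gauss_pos' x m v hv)
      rcases lt_or_gt_of_ne hx with h | h
      · have := hg (x - c) (2 * m - x - c) (by nlinarith)
        exact mul_pos_of_neg_of_neg (by linarith) (by linarith)
      · have := hg (2 * m - x - c) (x - c) (by nlinarith)
        exact mul_pos (by linarith) (by linarith))
    linarith
  · intro hc
    rw [div_lt_iff₀ hD]
    have := refl_integral_pos (fun ω : ℝ => -((ω - m) * (g |ω - c| * gauss ω m v))) m hF.neg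
      (fun x hx => by
      have k := key x
      have : (x - m) * (g |x - c| - g |2 * m - x - c|) * gauss x m v < 0 := by
        refine mul_neg_of_neg_of_pos ?_ (gauss_pos' x m v hv)
        rcases lt_or_gt_of_ne hx with h | h
        · have := hg (2 * m - x - c) (x - c) (by nlinarith)
          exact mul_neg_of_neg_of_pos (by linarith) (by linarith)
        · have := hg (x - c) (2 * m - x - c) (by nlinarith)
          exact mul_neg_of_pos_of_neg (by linarith) (by linarith)
      linarith)
    rw [integral_neg] at this
    linarith
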